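/- (Korn–Maxwell–Morrey) Let 3 < p < ∞ and set α = 1 − 3/p. Let 𝔸 be an elliptic first-order homogeneous operator on ℝ³ with matrix representative A. Then there exists c > 0 such that [F]_{C^{0,α}(ℝ³)} ≤ c([A[F]]_{C^{0,α}(ℝ³)} + ‖curl F‖_{Lᵖ(ℝ³)}) for all F ∈ C_c^∞(ℝ³; ℝ^{3×3}). -/

import Mathlib

open MeasureTheory
open scoped ENNReal

noncomputable def pd (j : Fin 3) (f : (Fin 3 → ℝ) → ℝ) (x : Fin 3 → ℝ) : ℝ :=
  fderiv ℝ f x (Pi.single j 1)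

/-- The row-wise curl of a matrix field `F : ℝ³ → ℝ^{3×3}`. -/
noncomputable def mcurl (F : (Fin 3 → ℝ) → Fin 3 → Fin 3 → ℝ) (x : Fin 3 → ℝ) :
    Fin 3 → Fin 3 → ℝ :=
  fun i => ![pd 1 (fun y => F y i 2) x - pd 2 (fun y => F y i 1) x,
             pd 2 (fun y => F y i 0) x - pd 0 (fun y => F y i 2) x,
             pd 0 (fun y => F y i 1) x - pd 1 (fun y => F y i 0) x]

/-- Ellipticity of the operator induced by `A`. -/
def IsElliptic {N : ℕ} (A : (Fin 3 → Fin 3 → ℝ) →ₗ[ℝ] (Fin N → ℝ)) : Prop :=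
  ∀ ξ : Fin 3 → ℝ, ξ ≠ 0 →
    Function.Injective (fun v : Fin 3 → ℝ => A (fun i j => v i * ξ j))

/-- The homogeneous `α`-Hölder seminorm `sup_{x ≠ y} |u(x) − u(y)|/|x−y|^α`. -/
noncomputable def holderSeminorm {E : Type*} [NormedAddCommGroup E] (α : ℝ)
    (u : (Fin 3 → ℝ) → E) : ℝ≥0∞ :=
  ⨆ (x : Fin 3 → ℝ) (y : Fin 3 → ℝ) (_ : x ≠ y),
    ENNReal.ofReal (‖u x - u y‖ / dist x y ^ α)

/-!
Let `φ` be a mollifier whose Fourier transform is `1` near the origin and compactly supported.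
Comparing `F` at two points at unit distance, mollification at scale `ε` costs `O(ε ^ α) [F]`, and
the mollification at scale `ε⁻¹` varies by `O(ε ^ (1 - α)) [F]` between them. The difference of the
two mollifications is a Fourier multiplier supported in an annulus. The symbol of the row-wise curl
at `ξ ≠ 0` annihilates exactly the matrices `v ⊗ ξ`, on which `A` is injective by ellipticity, so
there `F̂(ξ)` can be recovered from `A F̂(ξ)` and the symbol of the curl applied to `F̂(ξ)`. This
writes the difference as Schwartz kernels applied to `A F` and to `curl F`. The first kernel has
mean zero, so it pairs with the Hölder seminorm, and the second pairs with `Lᵖ` by Hölder's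
inequality. For small `ε` the terms in `[F]` are absorbed, and both sides scale alike since
`α = 1 - 3 / p`.
-/

open Module
open scoped FourierTransform SchwartzMap LineDeriv NNReal RealInnerProductSpace Topology

section LeftInverse

variable {V W Ξ : Type*} [NormedAddCommGroup V] [NormedSpace ℝ V] [FiniteDimensional ℝ V]
  [NormedAddCommGroup W] [NormedSpace ℝ W] [FiniteDimensional ℝ W]
  [NormedAddCommGroup Ξ] [NormedSpace ℝ Ξ]

variable (V W) in
lemma exists_clm_comp_injective :
    ∃ τ : (V →L[ℝ] W) →L[ℝ] W →L[ℝ] V,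
      ∀ S : V →L[ℝ] W, Function.Injective S → Function.Injective (τ S ∘L S) := by
  let eV : V ≃L[ℝ] EuclideanSpace ℝ (Fin (finrank ℝ V)) := toEuclidean
  let eW : W ≃L[ℝ] EuclideanSpace ℝ (Fin (finrank ℝ W)) := toEuclidean
  let euclidean (S : V →L[ℝ] W) := eW.toContinuousLinearMap ∘L S ∘L eV.symm.toContinuousLinearMap
  let transpose (S : V →L[ℝ] W) : W →L[ℝ] V :=
    eV.symm.toContinuousLinearMap ∘L (euclidean S).adjoint ∘L eW.toContinuousLinearMap
  have hadd (S T) : transpose (S + T) = transpose S + transpose T := by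
    ext w; simp [transpose, euclidean]
  have hsmul (r : ℝ) (S) : transpose (r • S) = r • transpose S := by
    ext w; simp [transpose, euclidean]
  refine ⟨LinearMap.toContinuousLinearMap ⟨⟨transpose, hadd⟩, hsmul⟩, fun S hS ↦ ?_⟩
  refine (injective_iff_map_eq_zero _).2 fun v hv ↦ ?_
  have hadjoint : (euclidean S).adjoint (eW (S v)) = 0 := by
    simpa [transpose] using hv
  have hinner : inner ℝ (eW (S v)) (eW (S v)) = 0 := by
    simpa [hadjoint, euclidean] using
      ((euclidean S).adjoint_inner_left (eV v) (eW (S v))).symm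
  simpa [map_eq_zero_iff S hS] using hinner

lemma exists_contDiff_leftInverse {n : WithTop ℕ∞} {S : Ξ → V →L[ℝ] W} {θ : Ξ → ℝ}
    (hS : ContDiff ℝ n S) (hθ : ContDiff ℝ n θ)
    (hinj : ∀ ξ ∈ tsupport θ, Function.Injective (S ξ)) :
    ∃ L : Ξ → W →L[ℝ] V, ContDiff ℝ n L ∧ Function.support L ⊆ Function.support θ ∧
      ∀ ξ, L ξ ∘L S ξ = θ ξ • ContinuousLinearMap.id ℝ V := by
  obtain ⟨τ, hτ⟩ := exists_clm_comp_injective V W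
  let gram (ξ : Ξ) : V →L[ℝ] V := τ (S ξ) ∘L S ξ
  have hgram : ContDiff ℝ n gram := (τ.contDiff.comp hS).clm_comp hS
  have hequiv (ξ) (hξ : ξ ∈ tsupport θ) : ∃ e : V ≃L[ℝ] V, (e : V →L[ℝ] V) = gram ξ :=
    ⟨(LinearEquiv.ofInjectiveEndo (gram ξ : V →ₗ[ℝ] V) (hτ _ (hinj ξ hξ))).toContinuousLinearEquiv,
      rfl⟩
  refine ⟨fun ξ ↦ θ ξ • ((gram ξ).inverse ∘L τ (S ξ)), ?_, ?_, fun ξ ↦ ?_⟩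
  · refine contDiff_iff_contDiffAt.2 fun ξ ↦ ?_
    by_cases hξ : ξ ∈ tsupport θ
    · obtain ⟨e, he⟩ := hequiv ξ hξ
      have hinv : ContDiffAt ℝ n (fun ξ ↦ (gram ξ).inverse) ξ :=
        (he ▸ contDiffAt_map_inverse e).comp ξ hgram.contDiffAt
      exact hθ.contDiffAt.smul (hinv.clm_comp (τ.contDiff.comp hS).contDiffAt)
    · refine contDiffAt_const (c := 0) |>.congr_of_eventuallyEq ?_
      filter_upwards [notMem_tsupport_iff_eventuallyEq.1 hξ] with η hη
      simp [hη]
  · exact Function.support_smul_subset_left θ _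
  · by_cases hξ : θ ξ = 0
    · simp [hξ]
    · obtain ⟨e, he⟩ := hequiv ξ (subset_tsupport _ hξ)
      have : (gram ξ).inverse ∘L gram ξ = .id ℝ V := by
        rw [← he, ContinuousLinearMap.inverse_equiv]; exact e.coe_symm_comp_coe
      rw [ContinuousLinearMap.smul_comp, ContinuousLinearMap.comp_assoc, this]

end LeftInverse

section RealFourier

variable {E Z Z' : Type*} [NormedAddCommGroup E] [InnerProductSpace ℝ E] [FiniteDimensional ℝ E]
  [MeasurableSpace E] [BorelSpace E]
  [NormedAddCommGroup Z] [NormedSpace ℝ Z] [FiniteDimensional ℝ Z]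
  [NormedAddCommGroup Z'] [NormedSpace ℝ Z'] [FiniteDimensional ℝ Z']

variable (Z) in
/-- The embedding of `Z` into its complexification, realised as `ℂᵈ` through a basis of `Z`. -/
noncomputable def toComplexification : Z →L[ℝ] (Fin (finrank ℝ Z) → ℂ) :=
  .pi fun i ↦ Complex.ofRealCLM ∘L .proj i ∘L (finBasis ℝ Z).equivFunL.toContinuousLinearMap

variable (Z) in
/-- The map from the complexification of `Z` back to `Z` which applies the real-linear functional
`u` in each coordinate: the real part for `u = re`, the imaginary part for `u = im`. -/
noncomputable def ofComplexification (u : ℂ →L[ℝ] ℝ) : (Fin (finrank ℝ Z) → ℂ) →L[ℝ] Z :=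
  (finBasis ℝ Z).equivFunL.symm.toContinuousLinearMap ∘L .pi fun i ↦ u ∘L .proj i

lemma ofComplexification_smul (u : ℂ →L[ℝ] ℝ) (a : ℂ) (z : Z) :
    ofComplexification Z u (a • toComplexification Z z) = u a • z := by
  refine (finBasis ℝ Z).equivFunL.symm_apply_eq.2 (funext fun i ↦ ?_)
  have hcoord (t : ℝ) : u (a * t) = u a * t := by
    rw [mul_comm, ← Complex.real_smul, map_smul, smul_eq_mul, mul_comm]
  simpa [toComplexification] using hcoord _

lemma ofComplexification_im_I_smul (w : Fin (finrank ℝ Z) → ℂ) :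
    ofComplexification Z Complex.imCLM (Complex.I • w) = ofComplexification Z Complex.reCLM w := by
  simp [ofComplexification]

/-- The real-valued Fourier integrals `x ↦ ∫ u(exp(-2πi⟪ξ, x⟫)) m(ξ) dξ` of a function `m` with
values in a real space: for `u = re` this is the cosine transform, for `u = im` minus the sine
transform. -/
noncomputable def realFourier (u : ℂ →L[ℝ] ℝ) : 𝓢(E, Z) →L[ℝ] 𝓢(E, Z) :=
  SchwartzMap.postcompCLM (ofComplexification Z u) ∘L FourierTransform.fourierCLM ℝ 𝓢(E, _) ∘L
    SchwartzMap.postcompCLM (toComplexification Z)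

lemma realFourier_eq (u : ℂ →L[ℝ] ℝ) (m : 𝓢(E, Z)) (x : E) :
    realFourier u m x =
      ofComplexification Z u (𝓕 (m.postcompCLM (toComplexification Z)) x) := rfl

lemma realFourier_apply (u : ℂ →L[ℝ] ℝ) (m : 𝓢(E, Z)) (x : E) :
    realFourier u m x = ∫ ξ, u (𝐞 (-⟪ξ, x⟫)) • m ξ := by
  have hint : Integrable fun ξ ↦ 𝐞 (-⟪ξ, x⟫) • (m.postcompCLM (toComplexification Z)) ξ :=
    (Real.fourierIntegral_convergent_iff x).2 (m.postcompCLM (toComplexification Z)).integrable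
  rw [realFourier_eq, SchwartzMap.fourier_coe, Real.fourier_eq,
    ← ContinuousLinearMap.integral_comp_comm _ hint]
  simp only [SchwartzMap.postcompCLM_apply, Circle.smul_def, ofComplexification_smul]

lemma realFourier_postcompCLM (u : ℂ →L[ℝ] ℝ) (L : Z →L[ℝ] Z') (m : 𝓢(E, Z)) (x : E) :
    realFourier u (m.postcompCLM L) x = L (realFourier u m x) := by
  have hint : Integrable fun ξ ↦ u (𝐞 (-⟪ξ, x⟫)) • m ξ := by
    refine m.integrable.bdd_smul ‖u‖ (by fun_prop) (.of_forall fun ξ ↦ ?_)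
    exact u.unit_le_opNorm _ (Circle.norm_coe _).le
  simp [realFourier_apply, ← ContinuousLinearMap.integral_comp_comm L hint]

lemma integral_realFourier_re (m : 𝓢(E, Z)) : ∫ x, realFourier Complex.reCLM m x = m 0 := by
  set M := m.postcompCLM (toComplexification Z)
  have hM : ∫ x, 𝓕 M x = M 0 := by
    have h : 𝓕⁻ (𝓕 M) = M := FourierTransform.fourierInv_fourier_eq M
    conv_rhs => rw [← h, SchwartzMap.fourierInv_coe, Real.fourierInv_eq]
    simp
  simp only [realFourier_eq]
  rw [ContinuousLinearMap.integral_comp_comm _ (𝓕 M).integrable, hM]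
  simpa [M] using ofComplexification_smul Complex.reCLM 1 (m 0)

lemma fderiv_realFourier_im (m : 𝓢(E, Z)) (x v : E) :
    fderiv ℝ (realFourier Complex.imCLM m) x v =
      (-(2 * Real.pi)) • realFourier Complex.reCLM (m.smulLeftCLM Z (inner ℝ · v)) x := by
  set g : E → ℝ := (inner ℝ · v)
  have hg : g.HasTemperateGrowth := by fun_prop
  set M := m.postcompCLM (toComplexification Z)
  have hM : SchwartzMap.smulLeftCLM _ g M =
      (m.smulLeftCLM Z g).postcompCLM (toComplexification Z) := by
    ext; simp [M, hg]
  have hderiv : fderiv ℝ (realFourier Complex.imCLM m) x v =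
      ofComplexification Z Complex.imCLM (∂_{v} (𝓕 M) x) := by
    have h := ((ofComplexification Z Complex.imCLM).hasFDerivAt.comp x
      (𝓕 M).differentiableAt.hasFDerivAt).fderiv
    rw [SchwartzMap.lineDerivOp_apply_eq_fderiv, ← ContinuousLinearMap.comp_apply, ← h]
    rfl
  rw [hderiv, SchwartzMap.lineDerivOp_fourier_eq, hM]
  have hsmul (w : Fin (finrank ℝ Z) → ℂ) : -(2 * (Real.pi : ℂ) * Complex.I) • w =
      (-(2 * Real.pi)) • Complex.I • w := by
    ext i; simp; ring
  rw [FourierTransform.fourier_smul, smul_apply, hsmul, map_smul, ofComplexification_im_I_smul]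
  rfl

lemma realFourier_comp_smul (u : ℂ →L[ℝ] ℝ) {s : ℝ} (hs : 0 < s) {m m' : 𝓢(E, Z)}
    (hm : ∀ ξ, m' ξ = m (s • ξ)) (x : E) :
    realFourier u m' (s • x) = (s ^ finrank ℝ E)⁻¹ • realFourier u m x := by
  rw [realFourier_apply, realFourier_apply,
    ← Measure.integral_comp_smul_of_nonneg volume (fun ξ ↦ u (𝐞 (-⟪ξ, x⟫)) • m ξ) s (hR := hs.le)]
  simp [hm, inner_smul_left, inner_smul_right]

omit [FiniteDimensional ℝ Z] in
lemma integral_realFourier_comp_smul (u : ℂ →L[ℝ] ℝ) {s : ℝ} (hs : 0 < s) {m m' : 𝓢(E, ℝ)}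
    (hm : ∀ ξ, m' ξ = m (s • ξ)) (w : E → Z) :
    ∫ z, realFourier u m' z • w z = ∫ z, realFourier u m z • w (s • z) := by
  have hscale := Measure.integral_comp_smul_of_nonneg volume
    (fun z ↦ realFourier u m' z • w z) s (hR := hs.le)
  simp only [realFourier_comp_smul u hs hm, smul_assoc, integral_smul] at hscale
  exact (smul_right_injective _ (by positivity) hscale).symm

end RealFourier

lemma integrable_clm_apply_of_hasCompactSupport {X Z V : Type*} [TopologicalSpace X]
    [MeasurableSpace X] [OpensMeasurableSpace X] {μ : Measure X}
    [IsFiniteMeasureOnCompacts μ] [NormedAddCommGroup Z] [NormedSpace ℝ Z]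
    [NormedAddCommGroup V] [NormedSpace ℝ V] {K : X → Z →L[ℝ] V} (hK : Continuous K)
    {u : X → Z} (hu : Continuous u) (huc : HasCompactSupport u) :
    Integrable (fun z ↦ K z (u z)) μ :=
  (hK.clm_apply hu).integrable_of_hasCompactSupport (huc.mono fun z hz ↦ by aesop)

section Kernels

variable {E V W₁ W₂ : Type*} [NormedAddCommGroup E]
  [NormedAddCommGroup V] [NormedSpace ℝ V] [NormedAddCommGroup W₁] [NormedSpace ℝ W₁]
  [NormedAddCommGroup W₂] [NormedSpace ℝ W₂]

/-- A linear map `A` on `V` and a first-order homogeneous operator `F ↦ B (∇F)`, with symbol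
`ξ ↦ (v ↦ B (v ⊗ ξ))`, are jointly elliptic if away from `ξ = 0` no nonzero vector is annihilated
by both `A` and the symbol. -/
def IsJointlyElliptic [NormedSpace ℝ E] (A : V →L[ℝ] W₁) (B : (E →L[ℝ] V) →L[ℝ] W₂) : Prop :=
  ∀ ξ : E →L[ℝ] ℝ, ξ ≠ 0 → ∀ v, A v = 0 → B (ξ.smulRight v) = 0 → v = 0

variable [InnerProductSpace ℝ E] [FiniteDimensional ℝ E] [FiniteDimensional ℝ V]
  [FiniteDimensional ℝ W₁] [FiniteDimensional ℝ W₂]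
  {A : V →L[ℝ] W₁} {B : (E →L[ℝ] V) →L[ℝ] W₂}

omit [FiniteDimensional ℝ E] in
lemma IsJointlyElliptic.exists_multipliers (hAB : IsJointlyElliptic A B) {θ : E → ℝ}
    (hθ : ContDiff ℝ (⊤ : ℕ∞) θ) (hθc : HasCompactSupport θ) (hθ0 : 0 ∉ tsupport θ) :
    ∃ (M₁ : 𝓢(E, W₁ →L[ℝ] V)) (M₂ : 𝓢(E, W₂ →L[ℝ] V)), M₁ 0 = 0 ∧
      ∀ ξ v, M₁ ξ (A v) + M₂ ξ (B ((innerSL ℝ ξ).smulRight v)) = θ ξ • v := by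
  let symbol : E →L[ℝ] V →L[ℝ] W₂ :=
    ContinuousLinearMap.compL ℝ V (E →L[ℝ] V) W₂ B ∘L .smulRightL ℝ E V ∘L innerSL ℝ
  let S (ξ : E) : V →L[ℝ] W₁ × W₂ := .inl ℝ W₁ W₂ ∘L A + .inr ℝ W₁ W₂ ∘L symbol ξ
  have hS : ContDiff ℝ (⊤ : ℕ∞) S :=
    contDiff_const.add (contDiff_const.clm_comp symbol.contDiff)
  have hinj (ξ) (hξ : ξ ∈ tsupport θ) : Function.Injective (S ξ) := by
    have hξ0 : innerSL ℝ ξ ≠ 0 := by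
      rw [← norm_ne_zero_iff, innerSL_apply_norm, norm_ne_zero_iff]
      exact fun h ↦ hθ0 (h ▸ hξ)
    refine (injective_iff_map_eq_zero _).2 fun v hv ↦ ?_
    have hv' : A v = 0 ∧ B ((innerSL ℝ ξ).smulRight v) = 0 := by simpa [S, symbol] using hv
    exact hAB _ hξ0 v hv'.1 hv'.2
  obtain ⟨L, hL, hLθ, hLS⟩ := exists_contDiff_leftInverse hS hθ hinj
  have hLc : HasCompactSupport L := hθc.mono hLθ
  let M := hLc.toSchwartzMap hL
  refine ⟨M.postcompCLM (.precomp V (.inl ℝ W₁ W₂)),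
    M.postcompCLM (.precomp V (.inr ℝ W₁ W₂)), ?_, fun ξ v ↦ ?_⟩
  · have : L 0 = 0 := Function.notMem_support.1 fun h ↦ hθ0 (subset_tsupport _ (hLθ h))
    simp [M, this]
  · simpa [S, M, symbol] using congr($(hLS ξ) v)

variable [MeasurableSpace E] [BorelSpace E]

omit [FiniteDimensional ℝ V] in
lemma integral_apply_fderiv_eq_neg {Z : Type*} [NormedAddCommGroup Z] [NormedSpace ℝ Z]
    (H : 𝓢(E, Z →L[ℝ] V)) {u : E → Z} (hu : ContDiff ℝ 1 u) (huc : HasCompactSupport u) (v : E) :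
    ∫ z, H z (fderiv ℝ u z v) = -∫ z, fderiv ℝ H z v (u z) := by
  have hu' : Continuous fun z ↦ fderiv ℝ u z v :=
    (hu.continuous_fderiv one_ne_zero).clm_apply continuous_const
  have hH' : Continuous fun z ↦ fderiv ℝ H z v :=
    ((H.smooth 1).continuous_fderiv one_ne_zero).clm_apply continuous_const
  exact integral_bilinear_fderiv_right_eq_neg_left_of_integrable
    (B := ContinuousLinearMap.id ℝ (Z →L[ℝ] V))
    (integrable_clm_apply_of_hasCompactSupport hH' hu.continuous huc)
    (integrable_clm_apply_of_hasCompactSupport H.continuous hu' (huc.fderiv_apply ℝ v))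
    (integrable_clm_apply_of_hasCompactSupport H.continuous hu.continuous huc)
    (fun z _ ↦ H.differentiableAt) (fun z _ ↦ hu.differentiable one_ne_zero z)

lemma realFourier_re_smul_eq {θ : 𝓢(E, ℝ)} {M₁ : 𝓢(E, W₁ →L[ℝ] V)} {M₂ : 𝓢(E, W₂ →L[ℝ] V)}
    (h : ∀ ξ v, M₁ ξ (A v) + M₂ ξ (B ((innerSL ℝ ξ).smulRight v)) = θ ξ • v) (z : E) (v : V) :
    realFourier Complex.reCLM θ z • v = realFourier Complex.reCLM M₁ z (A v) +
      ∑ i, realFourier Complex.reCLM (M₂.smulLeftCLM _ (inner ℝ · (stdOrthonormalBasis ℝ E i))) z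
        (B ((innerSL ℝ (stdOrthonormalBasis ℝ E i)).smulRight v)) := by
  set e := stdOrthonormalBasis ℝ E
  have hmul : θ.postcompCLM (.toSpanSingleton ℝ v) = M₁.postcompCLM (.apply ℝ V (A v)) +
      ∑ i, (M₂.smulLeftCLM _ (inner ℝ · (e i))).postcompCLM
        (.apply ℝ V (B ((innerSL ℝ (e i)).smulRight v))) := by
    ext ξ
    have hξ : (innerSL ℝ ξ).smulRight v = ∑ i, ⟪ξ, e i⟫ • (innerSL ℝ (e i)).smulRight v := by
      ext w; simp [smul_smul, ← Finset.sum_smul, e.sum_inner_mul_inner]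
    have hg (i) : (inner ℝ · (e i) : E → ℝ).HasTemperateGrowth := by fun_prop
    simp [← h, hξ, hg]
  simpa [realFourier_postcompCLM] using congr(realFourier Complex.reCLM $hmul z)

lemma integral_realFourier_im_apply_fderiv (M : 𝓢(E, W₂ →L[ℝ] V)) (B : (E →L[ℝ] V) →L[ℝ] W₂)
    {F : E → V} (hF : ContDiff ℝ 1 F) (hFc : HasCompactSupport F) :
    ∫ z, realFourier Complex.imCLM M z (B (fderiv ℝ F z)) =
      (2 * Real.pi) • ∑ i, ∫ z, realFourier Complex.reCLM
        (M.smulLeftCLM _ (inner ℝ · (stdOrthonormalBasis ℝ E i))) z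
          (B ((innerSL ℝ (stdOrthonormalBasis ℝ E i)).smulRight (F z))) := by
  set e := stdOrthonormalBasis ℝ E
  set H := realFourier Complex.imCLM M
  let T (i) : V →L[ℝ] W₂ := B ∘L .smulRightL ℝ E V (innerSL ℝ (e i))
  have hTF (i) : ContDiff ℝ 1 (T i ∘ F) := (T i).contDiff.comp hF
  have hTFc (i) : HasCompactSupport (T i ∘ F) := hFc.comp_left (map_zero _)
  have hfderiv (z) : B (fderiv ℝ F z) = ∑ i, fderiv ℝ (T i ∘ F) z (e i) := by
    have hexpand : fderiv ℝ F z = ∑ i, (innerSL ℝ (e i)).smulRight (fderiv ℝ F z (e i)) := by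
      ext w
      conv_lhs => rw [← e.sum_repr' w]
      simp
    have hcomp (i) : fderiv ℝ (T i ∘ F) z = T i ∘L fderiv ℝ F z :=
      ((T i).hasFDerivAt.comp z (hF.differentiable one_ne_zero z).hasFDerivAt).fderiv
    conv_lhs => rw [hexpand, map_sum]
    simp [hcomp, T]
  have hint (i) : Integrable fun z ↦ H z (fderiv ℝ (T i ∘ F) z (e i)) :=
    integrable_clm_apply_of_hasCompactSupport H.continuous
      (((hTF i).continuous_fderiv one_ne_zero).clm_apply continuous_const)
      ((hTFc i).fderiv_apply ℝ (e i))
  simp only [hfderiv, map_sum]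
  rw [integral_finsetSum _ fun i _ ↦ hint i, Finset.smul_sum]
  refine Finset.sum_congr rfl fun i _ ↦ ?_
  rw [integral_apply_fderiv_eq_neg H (hTF i) (hTFc i), ← integral_neg, ← integral_smul]
  simp [H, fderiv_realFourier_im, T]

lemma IsJointlyElliptic.exists_kernels (hAB : IsJointlyElliptic A B) {θ : 𝓢(E, ℝ)}
    (hθc : HasCompactSupport θ) (hθ0 : 0 ∉ tsupport θ) :
    ∃ (G : 𝓢(E, W₁ →L[ℝ] V)) (H : 𝓢(E, W₂ →L[ℝ] V)), ∫ z, G z = 0 ∧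
      ∀ F : E → V, ContDiff ℝ 1 F → HasCompactSupport F →
        ∫ z, realFourier Complex.reCLM θ z • F z =
          (∫ z, G z (A (F z))) + ∫ z, H z (B (fderiv ℝ F z)) := by
  obtain ⟨M₁, M₂, hM₁, hM⟩ := hAB.exists_multipliers (θ.smooth _) hθc hθ0
  refine ⟨realFourier Complex.reCLM M₁, (2 * Real.pi)⁻¹ • realFourier Complex.imCLM M₂,
    by rw [integral_realFourier_re, hM₁], fun F hF hFc ↦ ?_⟩
  set e := stdOrthonormalBasis ℝ E
  have hG := integrable_clm_apply_of_hasCompactSupport (μ := volume)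
    (realFourier Complex.reCLM M₁).continuous (A.continuous.comp hF.continuous)
    (hFc.comp_left A.map_zero)
  have hH (i) : Integrable fun z ↦ realFourier Complex.reCLM (M₂.smulLeftCLM _ (inner ℝ · (e i))) z
      (B ((innerSL ℝ (e i)).smulRight (F z))) :=
    let T : V →L[ℝ] W₂ := B ∘L .smulRightL ℝ E V (innerSL ℝ (e i))
    integrable_clm_apply_of_hasCompactSupport (SchwartzMap.continuous _)
      (T.continuous.comp hF.continuous) (hFc.comp_left T.map_zero)
  simp only [realFourier_re_smul_eq hM, smul_apply, integral_smul,
    integral_realFourier_im_apply_fderiv M₂ B hF hFc, smul_smul]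
  rw [inv_mul_cancel₀ (by positivity), one_smul, ← integral_finsetSum _ fun i _ ↦ hH i]
  exact integral_add hG (integrable_finsetSum _ fun i _ ↦ hH i)

end Kernels

section HolderSeminorm

variable {X Y Z : Type*} [MetricSpace X] [EMetricSpace Y] [MetricSpace Z]

lemma eHolderNorm_le_iff {r : ℝ≥0} {f : X → Y} {C : ℝ≥0∞} :
    eHolderNorm r f ≤ C ↔ ∀ x y, edist (f x) (f y) ≤ C * edist x y ^ (r : ℝ) := by
  refine ⟨fun hC x y ↦ ?_, fun h ↦ ?_⟩
  · by_cases hf : MemHolder r f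
    · calc
        edist (f x) (f y) ≤ nnHolderNorm r f * edist x y ^ (r : ℝ) := hf.holderWith x y
        _ ≤ C * edist x y ^ (r : ℝ) := by
          rw [hf.coe_nnHolderNorm_eq_eHolderNorm]
          gcongr
    · obtain rfl : C = ⊤ := top_le_iff.1 (eHolderNorm_eq_top.2 hf ▸ hC)
      obtain rfl | hxy := eq_or_ne x y
      · simp
      · rw [ENNReal.top_mul (by simp [hxy, edist_ne_top])]
        exact le_top
  · induction C with
    | top => exact le_top
    | coe C => exact HolderWith.eHolderNorm_le h

lemma edist_le_eHolderNorm_mul (r : ℝ≥0) (f : X → Y) (x y : X) :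
    edist (f x) (f y) ≤ eHolderNorm r f * edist x y ^ (r : ℝ) :=
  eHolderNorm_le_iff.1 le_rfl x y

lemma eHolderNorm_comp_le (r : ℝ≥0) (f : X → Y) {g : Z → X} {K : ℝ≥0} (hg : LipschitzWith K g) :
    eHolderNorm r (fun z ↦ f (g z)) ≤ K ^ (r : ℝ) * eHolderNorm r f := by
  refine eHolderNorm_le_iff.2 fun x y ↦ ?_
  calc
    edist (f (g x)) (f (g y)) ≤ eHolderNorm r f * edist (g x) (g y) ^ (r : ℝ) :=
      edist_le_eHolderNorm_mul r f _ _
    _ ≤ eHolderNorm r f * (K * edist x y) ^ (r : ℝ) := by gcongr; exact hg x y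
    _ = K ^ (r : ℝ) * eHolderNorm r f * edist x y ^ (r : ℝ) := by
      rw [ENNReal.mul_rpow_of_nonneg _ _ r.coe_nonneg]; ring

end HolderSeminorm

section AbsMoment

variable {E Z V : Type*} [NormedAddCommGroup E] [MeasurableSpace E] {μ : Measure E}
  [NormedAddCommGroup Z] [NormedAddCommGroup V]

/-- The absolute moment `∫ ‖K z‖ ‖z‖ ^ α dμ(z)` of order `α` of a kernel `K`, which bounds
the pairing of `K` with an `α`-Hölder function vanishing at `0`. -/
noncomputable def absMoment (μ : Measure E) (α : ℝ≥0) (K : E → Z) : ℝ≥0∞ :=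
  ∫⁻ z, ‖K z‖ₑ * ‖z‖ₑ ^ (α : ℝ) ∂μ

lemma enorm_integral_le_absMoment_mul [BorelSpace E] [NormedSpace ℝ V] {α : ℝ≥0} {K : E → Z}
    {w : E → V} {C : ℝ≥0∞} (hK : AEStronglyMeasurable K μ)
    (hw : ∀ z, ‖w z‖ₑ ≤ ‖K z‖ₑ * ‖z‖ₑ ^ (α : ℝ) * C) :
    ‖∫ z, w z ∂μ‖ₑ ≤ absMoment μ α K * C := by
  have hmeas : AEMeasurable (fun z ↦ ‖K z‖ₑ * ‖z‖ₑ ^ (α : ℝ)) μ := by fun_prop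
  calc
    ‖∫ z, w z ∂μ‖ₑ ≤ ∫⁻ z, ‖K z‖ₑ * ‖z‖ₑ ^ (α : ℝ) * C ∂μ :=
      (enorm_integral_le_lintegral_enorm w).trans (lintegral_mono hw)
    _ = absMoment μ α K * C := lintegral_mul_const'' C hmeas

variable [NormedSpace ℝ E] [FiniteDimensional ℝ E] [BorelSpace E] [μ.IsAddHaarMeasure]

variable (μ) in
lemma exists_absMoment_le (α : ℝ≥0) :
    ∃ (k : ℕ) (I : ℝ≥0), ∀ (C : ℝ≥0) (K : E → Z), (∀ z, (1 + ‖z‖) ^ k * ‖K z‖ ≤ C) →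
      absMoment μ α K ≤ C * I := by
  set d : ℝ := finrank ℝ E + 1
  have hI : ∫⁻ z, ENNReal.ofReal ((1 + ‖z‖) ^ (-d)) ∂μ ≠ ⊤ :=
    (finite_integral_one_add_norm (by simp [d])).ne
  refine ⟨⌈α⌉₊ + (finrank ℝ E + 1), (∫⁻ z, ENNReal.ofReal ((1 + ‖z‖) ^ (-d)) ∂μ).toNNReal,
    fun C K hK ↦ ?_⟩
  rw [ENNReal.coe_toNNReal hI, ← lintegral_const_mul' _ _ ENNReal.coe_ne_top]
  refine lintegral_mono fun z ↦ ?_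
  have hz : 0 < 1 + ‖z‖ := by positivity
  have hpow : ‖z‖ ^ (α : ℝ) ≤ (1 + ‖z‖) ^ ⌈α⌉₊ := by
    rw [← Real.rpow_natCast]
    calc
      ‖z‖ ^ (α : ℝ) ≤ (1 + ‖z‖) ^ (α : ℝ) := by gcongr; linarith
      _ ≤ (1 + ‖z‖) ^ (⌈α⌉₊ : ℝ) := by
        gcongr
        · linarith [norm_nonneg z]
        · exact_mod_cast Nat.le_ceil α
  have hbound : ‖K z‖ * ‖z‖ ^ (α : ℝ) ≤ C * (1 + ‖z‖) ^ (-d) := by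
    rw [Real.rpow_neg hz.le, ← div_eq_mul_inv, le_div_iff₀ (by positivity)]
    calc
      ‖K z‖ * ‖z‖ ^ (α : ℝ) * (1 + ‖z‖) ^ d
          ≤ ‖K z‖ * (1 + ‖z‖) ^ ⌈α⌉₊ * (1 + ‖z‖) ^ d := by gcongr
      _ = (1 + ‖z‖) ^ (⌈α⌉₊ + (finrank ℝ E + 1)) * ‖K z‖ := by
        rw [pow_add, ← Real.rpow_natCast (1 + ‖z‖) (finrank ℝ E + 1)]
        push_cast
        ring
      _ ≤ C := hK z
  rw [← ofReal_norm, ← ofReal_norm, ENNReal.ofReal_rpow_of_nonneg (norm_nonneg z) α.coe_nonneg,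
    ← ENNReal.ofReal_mul (norm_nonneg _), ← ENNReal.ofReal_coe_nnreal,
    ← ENNReal.ofReal_mul C.coe_nonneg]
  exact ENNReal.ofReal_le_ofReal hbound

variable [NormedSpace ℝ Z]

omit [FiniteDimensional ℝ E] [MeasurableSpace E] [BorelSpace E] in
lemma exists_one_add_norm_pow_mul_le (k : ℕ) (f : 𝓢(E, Z)) :
    ∃ C : ℝ≥0, ∀ z, (1 + ‖z‖) ^ k * ‖f z‖ ≤ C := by
  have hbound (z) :=
    SchwartzMap.one_add_le_sup_seminorm_apply (𝕜 := ℝ) (m := (k, 0)) le_rfl le_rfl f z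
  simp only [norm_iteratedFDeriv_zero] at hbound
  exact ⟨⟨_, le_trans (by positivity) (hbound 0)⟩, hbound⟩

variable (μ) in
lemma absMoment_schwartz_ne_top (α : ℝ≥0) (f : 𝓢(E, Z)) : absMoment μ α f ≠ ⊤ := by
  obtain ⟨k, I, hI⟩ := exists_absMoment_le (Z := Z) μ α
  obtain ⟨C, hC⟩ := exists_one_add_norm_pow_mul_le k f
  exact ne_top_of_le_ne_top (by finiteness) (hI C f hC)

variable (μ) in
lemma exists_absMoment_sub_translate_le (α : ℝ≥0) (f : 𝓢(E, Z)) :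
    ∃ D : ℝ≥0, ∀ w : E, ‖w‖ ≤ 1 → absMoment μ α (fun z ↦ f z - f (z - w)) ≤ D * ‖w‖ₑ := by
  obtain ⟨k, I, hI⟩ := exists_absMoment_le (Z := Z) μ α
  obtain ⟨C, hC⟩ := exists_one_add_norm_pow_mul_le k (SchwartzMap.fderivCLM ℝ E Z f)
  refine ⟨2 ^ k * C * I, fun w hw ↦ ?_⟩
  have hfderiv (z) (y) (hy : y ∈ Metric.closedBall z 1) :
      ‖fderiv ℝ f y‖ ≤ 2 ^ k * C / (1 + ‖z‖) ^ k := by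
    have hzy : 1 + ‖z‖ ≤ 2 * (1 + ‖y‖) := by
      have := norm_le_norm_add_norm_sub y z
      linarith [mem_closedBall_iff_norm.1 hy, norm_nonneg y]
    rw [le_div_iff₀ (by positivity)]
    calc
      ‖fderiv ℝ f y‖ * (1 + ‖z‖) ^ k ≤ ‖fderiv ℝ f y‖ * (2 * (1 + ‖y‖)) ^ k := by gcongr
      _ = 2 ^ k * ((1 + ‖y‖) ^ k * ‖fderiv ℝ f y‖) := by rw [mul_pow]; ring
      _ ≤ 2 ^ k * C := by gcongr; exact hC y
  have hdecay (z) : (1 + ‖z‖) ^ k * ‖f z - f (z - w)‖ ≤ (2 ^ k * C * ‖w‖₊ : ℝ≥0) := by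
    have hmvt := (convex_closedBall z 1).norm_image_sub_le_of_norm_fderiv_le
      (fun y _ ↦ f.differentiableAt) (hfderiv z) (x := z - w) (y := z) (by simpa using hw) (by simp)
    rw [sub_sub_cancel, div_mul_eq_mul_div, le_div_iff₀ (by positivity), mul_comm] at hmvt
    simpa using hmvt
  refine (hI _ _ hdecay).trans_eq ?_
  rw [enorm_eq_nnnorm]
  push_cast
  ring

end AbsMoment

section HolderPairing

variable {E Z V : Type*} [NormedAddCommGroup E] [NormedSpace ℝ E] [FiniteDimensional ℝ E]
  [MeasurableSpace E] [BorelSpace E] [NormedAddCommGroup Z] [NormedSpace ℝ Z]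
  [NormedAddCommGroup V] [NormedSpace ℝ V] {μ : Measure E} [μ.IsAddHaarMeasure]

lemma enorm_integral_apply_le_of_integral_eq_zero {α : ℝ≥0}
    {K : 𝓢(E, Z →L[ℝ] V)} (hK : ∫ z, K z ∂μ = 0) {u : E → Z} (hu : Continuous u)
    (huc : HasCompactSupport u) :
    ‖∫ z, K z (u z) ∂μ‖ₑ ≤ absMoment μ α K * eHolderNorm α u := by
  have hint : Integrable (fun z ↦ K z (u z)) μ :=
    integrable_clm_apply_of_hasCompactSupport K.continuous hu huc
  have hcenter : ∫ z, K z (u z) ∂μ = ∫ z, K z (u z - u 0) ∂μ := by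
    simp only [map_sub]
    rw [integral_sub hint (K.integrable.apply_continuousLinearMap _),
      ← ContinuousLinearMap.integral_apply K.integrable, hK]
    simp
  rw [hcenter]
  refine enorm_integral_le_absMoment_mul K.continuous.aestronglyMeasurable fun z ↦ ?_
  calc
    ‖K z (u z - u 0)‖ₑ ≤ ‖K z‖ₑ * edist (u z) (u 0) := by
      rw [edist_eq_enorm_sub]; exact (K z).le_opENorm _
    _ ≤ ‖K z‖ₑ * (eHolderNorm α u * ‖z‖ₑ ^ (α : ℝ)) := by
      gcongr; simpa using edist_le_eHolderNorm_mul α u z 0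
    _ = ‖K z‖ₑ * ‖z‖ₑ ^ (α : ℝ) * eHolderNorm α u := by ring

end HolderPairing

lemma enorm_integral_apply_le_eLpNorm {X Z V : Type*} [MeasurableSpace X] {μ : Measure X}
    [NormedAddCommGroup Z] [NormedSpace ℝ Z] [NormedAddCommGroup V] [NormedSpace ℝ V]
    {K : X → Z →L[ℝ] V} {u : X → Z} (hK : AEStronglyMeasurable K μ) (hu : AEStronglyMeasurable u μ)
    {p q : ℝ≥0∞} [p.HolderConjugate q] :
    ‖∫ z, K z (u z) ∂μ‖ₑ ≤ eLpNorm K p μ * eLpNorm u q μ := by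
  have hHolder := eLpNorm_le_eLpNorm_mul_eLpNorm'_of_norm (p := p) (q := q) (r := 1)
    hK hu (fun T v ↦ T v) 1 (.of_forall fun z ↦ by simpa using (K z).le_opNorm (u z))
  rw [eLpNorm_one_eq_lintegral_enorm] at hHolder
  simpa using (enorm_integral_le_lintegral_enorm _).trans hHolder

section Scaling

variable {E V W₁ W₂ : Type*} [NormedAddCommGroup E] [NormedSpace ℝ E] [NormedAddCommGroup V]
  [NormedAddCommGroup W₁] [NormedSpace ℝ W₁] [NormedAddCommGroup W₂] [NormedSpace ℝ W₂]

lemma eHolderNorm_comp_add_smul_le (α : ℝ≥0) (u : E → V) (x : E) (r : ℝ) :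
    eHolderNorm α (fun z ↦ u (x + r • z)) ≤ ‖r‖ₑ ^ (α : ℝ) * eHolderNorm α u := by
  refine eHolderNorm_comp_le α u (K := ‖r‖₊) (LipschitzWith.of_dist_le_mul fun y z ↦ ?_)
  rw [dist_add_left, dist_smul₀, coe_nnnorm]

variable [FiniteDimensional ℝ E] [MeasurableSpace E] [BorelSpace E] (μ : Measure E)
  [μ.IsAddHaarMeasure]

lemma eLpNorm_comp_add_smul (u : E → V) (x : E) {r : ℝ} (hr : r ≠ 0) (p : ℝ≥0) :
    eLpNorm (fun z ↦ u (x + r • z)) p μ = ‖r‖ₑ ^ (-(finrank ℝ E / p : ℝ)) * eLpNorm u p μ := by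
  have hmap : μ.map (fun z ↦ x + r • z) = ‖r‖ₑ ^ (-(finrank ℝ E : ℝ)) • μ := by
    have hcomp : (fun z ↦ x + r • z) = (x + ·) ∘ (r • ·) := rfl
    rw [hcomp, ← Measure.map_map (by fun_prop) (by fun_prop), Measure.map_addHaar_smul μ hr,
      Measure.map_smul, map_add_left_eq_self, ← Real.enorm_eq_ofReal_abs, enorm_inv (by positivity),
      enorm_pow, ENNReal.rpow_neg, ENNReal.rpow_natCast]
  have hemb : MeasurableEmbedding fun z ↦ x + r • z :=
    (measurableEmbedding_addLeft x).comp (Homeomorph.smulOfNeZero r hr).measurableEmbedding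
  have h := hemb.eLpNorm_map_measure (μ := μ) (p := p) (g := u)
  rw [hmap, eLpNorm_smul_measure_of_ne_top ENNReal.coe_ne_top, ← ENNReal.rpow_mul] at h
  rw [← Function.comp_def u, ← h, smul_eq_mul]
  congr 2
  simp [div_eq_mul_inv]

variable [NormedSpace ℝ V]

lemma eLpNorm_clm_fderiv_comp_add_smul (B : (E →L[ℝ] V) →L[ℝ] W₂) (F : E → V) (x : E) {r : ℝ}
    (hr : r ≠ 0) (p : ℝ≥0) :
    eLpNorm (fun z ↦ B (fderiv ℝ (fun z ↦ F (x + r • z)) z)) p μ =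
      ‖r‖ₑ ^ (1 - finrank ℝ E / p : ℝ) * eLpNorm (fun x ↦ B (fderiv ℝ F x)) p μ := by
  have hfderiv (z) : B (fderiv ℝ (fun z ↦ F (x + r • z)) z) = r • B (fderiv ℝ F (x + r • z)) := by
    rw [← map_smul, ← fderiv_comp_add_left, ← fderiv_comp_smul]
  simp only [hfderiv]
  rw [← Pi.smul_def, eLpNorm_const_smul, eLpNorm_comp_add_smul μ (fun x ↦ B (fderiv ℝ F x)) x hr,
    ← mul_assoc, sub_eq_add_neg, ENNReal.rpow_add _ _ (by simpa) (by simp), ENNReal.rpow_one]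

/-- The quantity `[A F]_{C^{0,α}} + ‖B (∇F)‖_{Lᵖ}` which controls `F` in the Korn–Maxwell–Morrey
inequality for the first-order operator `F ↦ B (∇F)`. -/
noncomputable def kornMaxwellData (A : V →L[ℝ] W₁) (B : (E →L[ℝ] V) →L[ℝ] W₂) (α p : ℝ≥0)
    (F : E → V) : ℝ≥0∞ :=
  eHolderNorm α (fun x ↦ A (F x)) + eLpNorm (fun x ↦ B (fderiv ℝ F x)) p μ

lemma kornMaxwellData_comp_add_smul_le (A : V →L[ℝ] W₁) (B : (E →L[ℝ] V) →L[ℝ] W₂) {α p : ℝ≥0}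
    (hα : (α : ℝ) = 1 - finrank ℝ E / p) (F : E → V) (x : E) {r : ℝ} (hr : r ≠ 0) :
    kornMaxwellData μ A B α p (fun z ↦ F (x + r • z)) ≤
      ‖r‖ₑ ^ (α : ℝ) * kornMaxwellData μ A B α p F := by
  rw [kornMaxwellData, kornMaxwellData, eLpNorm_clm_fderiv_comp_add_smul μ B F x hr, ← hα, mul_add]
  gcongr
  exact eHolderNorm_comp_add_smul_le α (fun x ↦ A (F x)) x r

end Scaling

section Mollification

variable {E V : Type*} [NormedAddCommGroup E] [NormedSpace ℝ E] [MeasurableSpace E]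
  [NormedAddCommGroup V] [NormedSpace ℝ V]

/-- The average `∫ φ(z) u(x + r z) dμ(z)` of `u` about `x` at scale `r`. -/
noncomputable def mollify (μ : Measure E) (φ : E → ℝ) (r : ℝ) (u : E → V) (x : E) : V :=
  ∫ z, φ z • u (x + r • z) ∂μ

variable [FiniteDimensional ℝ E] [BorelSpace E] {μ : Measure E} [μ.IsAddHaarMeasure]

section Estimates

variable {u : E → V} (hu : Continuous u) (huc : HasCompactSupport u) {r : ℝ} (hr : r ≠ 0)

omit [MeasurableSpace E] [FiniteDimensional ℝ E] [BorelSpace E] [NormedSpace ℝ V] in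
include huc hr in
lemma hasCompactSupport_comp_add_smul (x : E) : HasCompactSupport fun z ↦ u (x + r • z) :=
  huc.comp_homeomorph ((Homeomorph.smulOfNeZero r hr).trans (Homeomorph.addLeft x))

include hu huc hr

omit [FiniteDimensional ℝ E] in
lemma integrable_smul_comp_add_smul (φ : 𝓢(E, ℝ)) (x : E) :
    Integrable (fun z ↦ φ z • u (x + r • z)) μ :=
  (φ.continuous.smul (by fun_prop)).integrable_of_hasCompactSupport
    (hasCompactSupport_comp_add_smul huc hr x).smul_left

variable [CompleteSpace V] (α : ℝ≥0)

lemma enorm_mollify_sub_integral_smul_le (φ : 𝓢(E, ℝ)) (x : E) :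
    ‖mollify μ φ r u x - (∫ z, φ z ∂μ) • u x‖ₑ ≤
      absMoment μ α φ * (‖r‖ₑ ^ (α : ℝ) * eHolderNorm α u) := by
  have hsub : mollify μ φ r u x - (∫ z, φ z ∂μ) • u x =
      ∫ z, φ z • (u (x + r • z) - u x) ∂μ := by
    simp only [smul_sub]
    rw [integral_sub (integrable_smul_comp_add_smul hu huc hr φ x) (φ.integrable.smul_const _),
      integral_smul_const, mollify]
  rw [hsub]
  refine enorm_integral_le_absMoment_mul φ.continuous.aestronglyMeasurable fun z ↦ ?_
  calc
    ‖φ z • (u (x + r • z) - u x)‖ₑ ≤ ‖φ z‖ₑ * (eHolderNorm α u * ‖r • z‖ₑ ^ (α : ℝ)) := by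
      rw [enorm_smul]
      gcongr
      simpa [edist_eq_enorm_sub] using edist_le_eHolderNorm_mul α u (x + r • z) x
    _ = ‖φ z‖ₑ * ‖z‖ₑ ^ (α : ℝ) * (‖r‖ₑ ^ (α : ℝ) * eHolderNorm α u) := by
      rw [enorm_smul, ENNReal.mul_rpow_of_nonneg _ _ α.coe_nonneg]; ring

lemma enorm_mollify_sub_mollify_le (φ : 𝓢(E, ℝ)) (x w : E) :
    ‖mollify μ φ r u x - mollify μ φ r u (x + r • w)‖ₑ ≤
      absMoment μ α (fun z ↦ φ z - φ (z - w)) * (‖r‖ₑ ^ (α : ℝ) * eHolderNorm α u) := by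
  let φ' := φ.compSubConstCLM ℝ w
  have hmean : ∫ z, (φ - φ') z ∂μ = 0 := by
    calc
      ∫ z, (φ - φ') z ∂μ = ∫ z, φ z ∂μ - ∫ z, φ (z - w) ∂μ :=
        integral_sub φ.integrable φ'.integrable
      _ = 0 := by rw [integral_sub_right_eq_self φ w, sub_self]
  have htranslate : mollify μ φ r u (x + r • w) = mollify μ φ' r u x := by
    have hshift (z : E) : x + r • w + r • (z - w) = x + r • z := by module
    rw [mollify, mollify, ← integral_sub_right_eq_self _ w]
    simp only [hshift]
    rfl
  have hsub : mollify μ φ r u x - mollify μ φ' r u x = mollify μ (φ - φ' : 𝓢(E, ℝ)) r u x := by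
    rw [mollify, mollify, ← integral_sub (integrable_smul_comp_add_smul hu huc hr φ x)
      (integrable_smul_comp_add_smul hu huc hr φ' x)]
    simp only [← sub_smul]
    rfl
  have h := enorm_mollify_sub_integral_smul_le (μ := μ) hu huc hr α (φ - φ') x
  rw [hmean, zero_smul, sub_zero] at h
  rwa [htranslate, hsub]

end Estimates

variable (μ V) in
lemma exists_enorm_mollify_sub_mollify_add_le [CompleteSpace V] (α : ℝ≥0) (φ : 𝓢(E, ℝ)) :
    ∃ D : ℝ≥0, ∀ {u : E → V}, Continuous u → HasCompactSupport u → ∀ {r : ℝ}, 0 < r →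
      ∀ x w, ‖w‖ ≤ r → ‖mollify μ φ r u x - mollify μ φ r u (x + w)‖ₑ ≤
        D * ‖r‖ₑ ^ (α - 1 : ℝ) * ‖w‖ₑ * eHolderNorm α u := by
  obtain ⟨D, hD⟩ := exists_absMoment_sub_translate_le μ α φ
  refine ⟨D, fun {u} hu huc {r} hr x w hw ↦ ?_⟩
  have hrw : ‖r⁻¹ • w‖ ≤ 1 := by
    rw [norm_smul, norm_inv, Real.norm_of_nonneg hr.le]
    exact inv_mul_le_one_of_le₀ hw hr.le
  have h := enorm_mollify_sub_mollify_le (μ := μ) hu huc hr.ne' α φ x (r⁻¹ • w)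
  rw [smul_inv_smul₀ hr.ne'] at h
  calc
    ‖mollify μ φ r u x - mollify μ φ r u (x + w)‖ₑ
        ≤ D * ‖r⁻¹ • w‖ₑ * (‖r‖ₑ ^ (α : ℝ) * eHolderNorm α u) :=
      h.trans (by gcongr; exact hD _ hrw)
    _ = D * ‖r‖ₑ ^ (α - 1 : ℝ) * ‖w‖ₑ * eHolderNorm α u := by
      rw [enorm_smul, enorm_inv hr.ne', ENNReal.rpow_sub _ _ (by simpa using hr.ne') (by simp),
        ENNReal.rpow_one, div_eq_mul_inv]
      ring

end Mollification

section FrequencyCutoff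

variable {E : Type*} [NormedAddCommGroup E] [InnerProductSpace ℝ E] [FiniteDimensional ℝ E]
  [MeasurableSpace E] [BorelSpace E]

variable (E) in
omit [MeasurableSpace E] [BorelSpace E] in
lemma exists_schwartz_eventually_eq_one :
    ∃ g : 𝓢(E, ℝ), HasCompactSupport g ∧ ∀ᶠ ξ in 𝓝 0, g ξ = 1 := by
  let b : ContDiffBump (0 : E) := ⟨1, 2, one_pos, one_lt_two⟩
  exact ⟨b.hasCompactSupport.toSchwartzMap b.contDiff, b.hasCompactSupport, b.eventuallyEq_one⟩

omit [FiniteDimensional ℝ E] [MeasurableSpace E] [BorelSpace E] in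
lemma exists_schwartz_comp_smul {g : 𝓢(E, ℝ)} (hg : HasCompactSupport g)
    (hg1 : ∀ᶠ ξ in 𝓝 0, g ξ = 1) {s : ℝ} (hs : s ≠ 0) :
    ∃ h : 𝓢(E, ℝ), (∀ ξ, h ξ = g (s • ξ)) ∧ HasCompactSupport h ∧ ∀ᶠ ξ in 𝓝 0, h ξ = 1 := by
  refine ⟨g.compCLMOfContinuousLinearEquiv ℝ (ContinuousLinearEquiv.smulLeft (Units.mk0 s hs)),
    fun ξ ↦ rfl, hg.comp_homeomorph (Homeomorph.smulOfNeZero s hs), ?_⟩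
  have hsmul : Filter.Tendsto (fun ξ : E ↦ s • ξ) (𝓝 0) (𝓝 0) := by
    simpa using (continuous_const_smul s).tendsto (0 : E)
  exact hsmul.eventually hg1

lemma exists_mollify_sub_mollify_eq {g : 𝓢(E, ℝ)} (hg : HasCompactSupport g)
    (hg1 : ∀ᶠ ξ in 𝓝 0, g ξ = 1) {s t : ℝ} (hs : 0 < s) (ht : 0 < t) :
    ∃ θ : 𝓢(E, ℝ), HasCompactSupport θ ∧ 0 ∉ tsupport θ ∧
      ∀ {V : Type*} [NormedAddCommGroup V] [NormedSpace ℝ V] {u : E → V},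
        Continuous u → HasCompactSupport u → ∀ x,
          mollify volume (realFourier Complex.reCLM g) s u x -
            mollify volume (realFourier Complex.reCLM g) t u x =
              ∫ z, realFourier Complex.reCLM θ z • u (x + z) := by
  obtain ⟨gs, hgs, hgsc, hgs1⟩ := exists_schwartz_comp_smul hg hg1 hs.ne'
  obtain ⟨gt, hgt, hgtc, hgt1⟩ := exists_schwartz_comp_smul hg hg1 ht.ne'
  refine ⟨gs - gt, hgsc.sub hgtc, ?_, fun {V} _ _ {u} hu huc x ↦ ?_⟩
  · rw [notMem_tsupport_iff_eventuallyEq]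
    filter_upwards [hgs1, hgt1] with ξ h₁ h₂
    simp [h₁, h₂]
  · have hint (ψ : 𝓢(E, ℝ)) : Integrable fun z ↦ ψ z • u (x + z) := by
      simpa using integrable_smul_comp_add_smul hu huc one_ne_zero ψ x
    rw [mollify, mollify, ← integral_realFourier_comp_smul _ hs hgs fun z ↦ u (x + z),
      ← integral_realFourier_comp_smul _ ht hgt fun z ↦ u (x + z),
      ← integral_sub (hint _) (hint _)]
    simp [sub_smul]

end FrequencyCutoff

lemma exists_pos_mul_rpow_add_mul_rpow_le {M D : ℝ≥0∞} (hM : M ≠ ⊤) (hD : D ≠ ⊤) {a b : ℝ}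
    (ha : 0 < a) (hb : 0 < b) {δ : ℝ≥0∞} (hδ : δ ≠ 0) :
    ∃ ε : ℝ, 0 < ε ∧ ε ≤ 1 ∧ M * ‖ε‖ₑ ^ a + D * ‖ε‖ₑ ^ b ≤ δ := by
  have hrpow {c : ℝ} (hc : 0 < c) {C : ℝ≥0∞} (hC : C ≠ ⊤) :
      Filter.Tendsto (fun ε : ℝ ↦ C * ‖ε‖ₑ ^ c) (𝓝[>] 0) (𝓝 0) := by
    have hcont : Continuous fun ε : ℝ ↦ C * ‖ε‖ₑ ^ c :=
      (ENNReal.continuous_const_mul hC).comp (ENNReal.continuous_rpow_const.comp continuous_enorm)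
    simpa [hc] using (hcont.tendsto 0).mono_left nhdsWithin_le_nhds
  have hsum := (hrpow ha hM).add (hrpow hb hD)
  rw [add_zero] at hsum
  obtain ⟨ε, hε, hε0, hε1⟩ := ((hsum.eventually_le_const hδ.bot_lt).and
    (Ioc_mem_nhdsGT one_pos)).exists
  exact ⟨ε, hε0, hε1, hε⟩

lemma eHolderNorm_ne_top_of_hasCompactSupport {E V : Type*} [NormedAddCommGroup E]
    [NormedSpace ℝ E] [NormedAddCommGroup V] [NormedSpace ℝ V] {F : E → V} (hF : ContDiff ℝ 1 F)
    (hFc : HasCompactSupport F) {α : ℝ≥0} (hα : α ≤ 1) : eHolderNorm α F ≠ ⊤ := by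
  obtain ⟨K, hK⟩ := hF.lipschitzWith_of_hasCompactSupport hFc one_ne_zero
  have hF_zero : MemHolder 0 F := by
    have hbounded := (hFc.isCompact_range hF.continuous).isBounded
    refine ⟨(Metric.ediam (Set.range F)).toNNReal, fun x y ↦ ?_⟩
    rw [NNReal.coe_zero, ENNReal.rpow_zero, mul_one, ENNReal.coe_toNNReal hbounded.ediam_ne_top]
    exact Metric.edist_le_ediam_of_mem (Set.mem_range_self x) (Set.mem_range_self y)
  exact eHolderNorm_ne_top.2 (hF_zero.memHolder_of_le_of_le hK.holderWith.memHolder bot_le hα)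

lemma le_two_mul_of_le_half_add {a b : ℝ≥0∞} (ha : a ≠ ⊤) (hab : a ≤ 2⁻¹ * a + b) :
    a ≤ 2 * b := by
  have hhalf : 2⁻¹ * a ≤ b := by
    refine (ENNReal.add_le_add_iff_left (a := 2⁻¹ * a) (by finiteness)).1 ?_
    rwa [← add_mul, ENNReal.inv_two_add_inv_two, one_mul]
  rwa [ENNReal.inv_mul_le_iff two_ne_zero ENNReal.ofNat_ne_top] at hhalf

lemma one_le_of_eq_one_sub_div {n : ℕ} {α p : ℝ≥0} (hα0 : 0 < α) (hα1 : α < 1)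
    (hα : (α : ℝ) = 1 - n / p) : 1 ≤ p := by
  have hnp_pos : 0 < (n / p : ℝ) := by linarith [NNReal.coe_lt_coe.2 hα1, NNReal.coe_one]
  have hnp_lt : (n / p : ℝ) < 1 := by linarith [NNReal.coe_pos.2 hα0]
  have hp : 0 < (p : ℝ) := p.coe_nonneg.lt_of_ne' fun h ↦ by simp [h] at hnp_pos
  have hn : 1 ≤ n := Nat.one_le_iff_ne_zero.2 fun h ↦ by simp [h] at hnp_pos
  exact_mod_cast (Nat.one_le_cast.2 hn).trans ((div_lt_one hp).1 hnp_lt).le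

section KornMaxwell

variable {E V W₁ W₂ : Type*} [NormedAddCommGroup E] [InnerProductSpace ℝ E] [FiniteDimensional ℝ E]
  [MeasurableSpace E] [BorelSpace E] [NormedAddCommGroup V] [NormedSpace ℝ V]
  [FiniteDimensional ℝ V] [NormedAddCommGroup W₁] [NormedSpace ℝ W₁] [FiniteDimensional ℝ W₁]
  [NormedAddCommGroup W₂] [NormedSpace ℝ W₂] [FiniteDimensional ℝ W₂]
  {A : V →L[ℝ] W₁} {B : (E →L[ℝ] V) →L[ℝ] W₂}

lemma IsJointlyElliptic.exists_enorm_integral_le (hAB : IsJointlyElliptic A B) {θ : 𝓢(E, ℝ)}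
    (hθc : HasCompactSupport θ) (hθ0 : 0 ∉ tsupport θ) (α : ℝ≥0) {p : ℝ≥0} (hp : 1 ≤ p) :
    ∃ C : ℝ≥0∞, C ≠ ⊤ ∧ ∀ F : E → V, ContDiff ℝ 1 F → HasCompactSupport F →
      ‖∫ z, realFourier Complex.reCLM θ z • F z‖ₑ ≤ C * kornMaxwellData volume A B α p F := by
  obtain ⟨G, H, hG, hGH⟩ := hAB.exists_kernels hθc hθ0
  obtain ⟨q, hpq⟩ : ∃ q, (p : ℝ≥0∞).HolderConjugate q :=
    ⟨_, .conjExponent (ENNReal.one_le_coe_iff.2 hp)⟩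
  have hGα := absMoment_schwartz_ne_top volume α G
  have hHq := (H.memLp q volume).eLpNorm_ne_top
  refine ⟨_, ENNReal.add_ne_top.2 ⟨hGα, hHq⟩, fun F hF hFc ↦ ?_⟩
  rw [hGH F hF hFc, kornMaxwellData]
  have hG_le : ‖∫ z, G z (A (F z))‖ₑ ≤
      absMoment volume α G * eHolderNorm α (fun x ↦ A (F x)) :=
    enorm_integral_apply_le_of_integral_eq_zero hG (A.continuous.comp hF.continuous)
      (hFc.comp_left A.map_zero)
  have hH_le : ‖∫ z, H z (B (fderiv ℝ F z))‖ₑ ≤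
      eLpNorm H q volume * eLpNorm (fun x ↦ B (fderiv ℝ F x)) p :=
    enorm_integral_apply_le_eLpNorm H.continuous.aestronglyMeasurable
      (B.continuous.comp (hF.continuous_fderiv one_ne_zero)).aestronglyMeasurable
  refine (enorm_add_le _ _).trans ((add_le_add hG_le hH_le).trans ?_)
  rw [add_mul]
  gcongr
  · exact le_self_add
  · exact le_add_self

lemma IsJointlyElliptic.exists_enorm_mollify_sub_mollify_le (hAB : IsJointlyElliptic A B)
    {g : 𝓢(E, ℝ)} (hg : HasCompactSupport g) (hg1 : ∀ᶠ ξ in 𝓝 0, g ξ = 1) {s t : ℝ} (hs : 0 < s)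
    (ht : 0 < t) (α : ℝ≥0) {p : ℝ≥0} (hp : 1 ≤ p) :
    ∃ C : ℝ≥0∞, C ≠ ⊤ ∧ ∀ F : E → V, ContDiff ℝ 1 F → HasCompactSupport F → ∀ x,
      ‖mollify volume (realFourier Complex.reCLM g) s F x -
        mollify volume (realFourier Complex.reCLM g) t F x‖ₑ ≤
          C * kornMaxwellData volume A B α p F := by
  obtain ⟨θ, hθc, hθ0, hθ⟩ := exists_mollify_sub_mollify_eq hg hg1 hs ht
  obtain ⟨C, hC_top, hC⟩ := hAB.exists_enorm_integral_le hθc hθ0 α hp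
  refine ⟨C, hC_top, fun F hF hFc x ↦ ?_⟩
  have hdata : kornMaxwellData volume A B α p (fun z ↦ F (x + z)) ≤
      kornMaxwellData volume A B α p F := by
    simpa [kornMaxwellData] using add_le_add
      (eHolderNorm_comp_add_smul_le α (fun x ↦ A (F x)) x 1)
      (eLpNorm_clm_fderiv_comp_add_smul volume B F x one_ne_zero p).le
  have hcompact : HasCompactSupport fun z ↦ F (x + z) := by
    simpa using hasCompactSupport_comp_add_smul hFc one_ne_zero x
  rw [hθ hF.continuous hFc]
  exact (hC _ (by fun_prop) hcompact).trans (by gcongr)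

lemma IsJointlyElliptic.exists_enorm_sub_le (hAB : IsJointlyElliptic A B) {α p : ℝ≥0}
    (hα0 : 0 < α) (hα1 : α < 1) (hα : (α : ℝ) = 1 - finrank ℝ E / p) :
    ∃ C : ℝ≥0∞, C ≠ ⊤ ∧ ∀ F : E → V, ContDiff ℝ 1 F → HasCompactSupport F → ∀ w, ‖w‖ = 1 →
      ‖F 0 - F w‖ₑ ≤ 2⁻¹ * eHolderNorm α F + C * kornMaxwellData volume A B α p F := by
  obtain ⟨g, hg, hg1⟩ := exists_schwartz_eventually_eq_one E
  set φ := realFourier Complex.reCLM g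
  have hφ : ∫ z, φ z = 1 := by rw [integral_realFourier_re, hg1.self_of_nhds]
  obtain ⟨D, hD⟩ := exists_enorm_mollify_sub_mollify_add_le V volume α φ
  set M := absMoment volume α φ
  have hM : 2 * M ≠ ⊤ :=
    ENNReal.mul_ne_top ENNReal.ofNat_ne_top (absMoment_schwartz_ne_top volume α φ)
  obtain ⟨ε, hε0, hε1, hε⟩ := exists_pos_mul_rpow_add_mul_rpow_le hM (D := D) ENNReal.coe_ne_top
    (a := α) (b := 1 - α) (δ := 2⁻¹) (mod_cast hα0) (sub_pos.2 (mod_cast hα1))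
    (ENNReal.inv_ne_zero.2 ENNReal.ofNat_ne_top)
  obtain ⟨C, hC_top, hC⟩ :=
    hAB.exists_enorm_mollify_sub_mollify_le hg hg1 hε0 (inv_pos.2 hε0) α
      (one_le_of_eq_one_sub_div hα0 hα1 hα)
  refine ⟨2 * C, by finiteness, fun F hF hFc w hw ↦ ?_⟩
  set P : ℝ → E → V := fun r ↦ mollify volume φ r F
  set X := kornMaxwellData volume A B α p F
  have hsmall (x) : ‖F x - P ε x‖ₑ ≤ M * (‖ε‖ₑ ^ (α : ℝ) * eHolderNorm α F) := by
    rw [enorm_sub_rev]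
    simpa [hφ] using
      enorm_mollify_sub_integral_smul_le (μ := volume) hF.continuous hFc hε0.ne' α φ x
  have hlarge : ‖P ε⁻¹ 0 - P ε⁻¹ w‖ₑ ≤ D * ‖ε‖ₑ ^ (1 - α : ℝ) * eHolderNorm α F := by
    have h := hD hF.continuous hFc (inv_pos.2 hε0) 0 w (hw.trans_le (one_le_inv₀ hε0 |>.2 hε1))
    rwa [zero_add, enorm_inv hε0.ne', ENNReal.inv_rpow, ← ENNReal.rpow_neg, neg_sub,
      ← ofReal_norm w, hw, ENNReal.ofReal_one, mul_one] at h
  calc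
    ‖F 0 - F w‖ₑ ≤ (‖F 0 - P ε 0‖ₑ + ‖P ε 0 - P ε⁻¹ 0‖ₑ) + ‖P ε⁻¹ 0 - P ε⁻¹ w‖ₑ +
        (‖F w - P ε w‖ₑ + ‖P ε w - P ε⁻¹ w‖ₑ) := by
      simp only [← edist_eq_enorm_sub]
      refine (edist_triangle4 _ (P ε⁻¹ 0) (P ε⁻¹ w) _).trans ?_
      rw [edist_comm _ (F w)]
      gcongr <;> exact edist_triangle _ _ _
    _ ≤ (M * (‖ε‖ₑ ^ (α : ℝ) * eHolderNorm α F) + C * X) +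
        D * ‖ε‖ₑ ^ (1 - α : ℝ) * eHolderNorm α F +
        (M * (‖ε‖ₑ ^ (α : ℝ) * eHolderNorm α F) + C * X) := by
      gcongr
      exacts [hsmall 0, hC F hF hFc 0, hsmall w, hC F hF hFc w]
    _ = (2 * M * ‖ε‖ₑ ^ (α : ℝ) + D * ‖ε‖ₑ ^ (1 - α : ℝ)) * eHolderNorm α F + 2 * C * X := by
      ring
    _ ≤ 2⁻¹ * eHolderNorm α F + 2 * C * X := by gcongr

lemma IsJointlyElliptic.exists_eHolderNorm_le (hAB : IsJointlyElliptic A B) {α p : ℝ≥0}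
    (hα0 : 0 < α) (hα1 : α < 1) (hα : (α : ℝ) = 1 - finrank ℝ E / p) :
    ∃ C : ℝ≥0∞, C ≠ ⊤ ∧ ∀ F : E → V, ContDiff ℝ 1 F → HasCompactSupport F →
      eHolderNorm α F ≤ C * kornMaxwellData volume A B α p F := by
  obtain ⟨C, hC_top, hC⟩ := hAB.exists_enorm_sub_le hα0 hα1 hα
  refine ⟨2 * C, by finiteness, fun F hF hFc ↦ ?_⟩
  have habsorb : eHolderNorm α F ≤
      2⁻¹ * eHolderNorm α F + C * kornMaxwellData volume A B α p F := by
    refine eHolderNorm_le_iff.2 fun x y ↦ ?_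
    obtain rfl | hxy := eq_or_ne x y
    · simp
    set r := dist x y
    have hr : r ≠ 0 := dist_ne_zero.2 hxy
    set w := r⁻¹ • (y - x)
    have hw : ‖w‖ = 1 := by
      rw [norm_smul, norm_inv, ← dist_eq_norm_sub', Real.norm_of_nonneg dist_nonneg,
        inv_mul_cancel₀ hr]
    have hy : x + r • w = y := by rw [smul_inv_smul₀ hr, add_sub_cancel]
    have h := hC (fun z ↦ F (x + r • z)) (by fun_prop)
      (hasCompactSupport_comp_add_smul hFc hr x) w hw
    have hr_edist : ‖r‖ₑ = edist x y := by
      rw [Real.enorm_of_nonneg dist_nonneg, edist_dist]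
    simp only [smul_zero, add_zero, hy, ← edist_eq_enorm_sub] at h
    calc
      edist (F x) (F y) ≤ _ := h
      _ ≤ 2⁻¹ * (‖r‖ₑ ^ (α : ℝ) * eHolderNorm α F) +
          C * (‖r‖ₑ ^ (α : ℝ) * kornMaxwellData volume A B α p F) := by
        gcongr
        · exact eHolderNorm_comp_add_smul_le α F x r
        · exact kornMaxwellData_comp_add_smul_le volume A B hα F x hr
      _ = _ := by rw [hr_edist]; ring
  rw [mul_assoc]
  exact le_two_mul_of_le_half_add
    (eHolderNorm_ne_top_of_hasCompactSupport hF hFc hα1.le) habsorb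

end KornMaxwell

section ChangeOfCoordinates

variable {E X V W₁ W₂ : Type*} [NormedAddCommGroup E] [NormedSpace ℝ E] [NormedAddCommGroup X]
  [NormedSpace ℝ X] [MeasurableSpace E] [BorelSpace E] [MeasurableSpace X] [BorelSpace X]
  [NormedAddCommGroup V] [NormedSpace ℝ V] [NormedAddCommGroup W₁] [NormedSpace ℝ W₁]
  [NormedAddCommGroup W₂] [NormedSpace ℝ W₂] {A : V →L[ℝ] W₁} {B : (X →L[ℝ] V) →L[ℝ] W₂}
  (e : E ≃L[ℝ] X)

omit [MeasurableSpace E] [BorelSpace E] [MeasurableSpace X] [BorelSpace X] in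
lemma IsJointlyElliptic.comp_precomp (hAB : IsJointlyElliptic A B) :
    IsJointlyElliptic A (B ∘L (e.symm : X →L[ℝ] E).precomp V) := by
  intro ξ hξ v hAv hBv
  refine hAB (ξ ∘L e.symm) (fun h ↦ hξ ?_) v hAv hBv
  ext x
  simpa using DFunLike.congr_fun h (e x)

variable [FiniteDimensional ℝ X] (ν : Measure E) [ν.IsAddHaarMeasure] (μ : Measure X)
  [μ.IsAddHaarMeasure]

lemma exists_kornMaxwellData_comp_le (A : V →L[ℝ] W₁) (B : (X →L[ℝ] V) →L[ℝ] W₂) (α p : ℝ≥0) :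
    ∃ C : ℝ≥0∞, C ≠ ⊤ ∧ ∀ F : X → V,
      kornMaxwellData ν A (B ∘L (e.symm : X →L[ℝ] E).precomp V) α p (F ∘ e) ≤
        C * kornMaxwellData μ A B α p F := by
  set k : ℝ≥0 := (ν.map e).addHaarScalarFactor μ
  refine ⟨‖(e : E →L[ℝ] X)‖₊ ^ (α : ℝ) + k ^ (p : ℝ)⁻¹, by finiteness, fun F ↦ ?_⟩
  have hHolder : eHolderNorm α (fun x ↦ A (F (e x))) ≤
      ‖(e : E →L[ℝ] X)‖₊ ^ (α : ℝ) * eHolderNorm α fun x ↦ A (F x) :=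
    eHolderNorm_comp_le α (fun x ↦ A (F x)) e.lipschitz
  have hLp : eLpNorm (fun x ↦ B (fderiv ℝ (F ∘ e) x ∘L e.symm)) p ν =
      k ^ (p : ℝ)⁻¹ * eLpNorm (fun x ↦ B (fderiv ℝ F x)) p μ := by
    have hfderiv (x) : fderiv ℝ (F ∘ e) x ∘L e.symm = fderiv ℝ F (e x) := by
      rw [e.comp_right_fderiv, ContinuousLinearMap.comp_assoc, e.coe_comp_coe_symm,
        ContinuousLinearMap.comp_id]
    have hmap := e.toHomeomorph.measurableEmbedding.eLpNorm_map_measure (μ := ν) (p := p)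
      (g := fun x ↦ B (fderiv ℝ F x))
    rw [e.coe_toHomeomorph, (ν.map e).isAddLeftInvariant_eq_smul μ,
      eLpNorm_smul_measure_of_ne_top' ENNReal.coe_ne_top] at hmap
    simp only [hfderiv]
    simpa [ENNReal.smul_def, ENNReal.coe_rpow_of_nonneg, Function.comp_def, k] using hmap.symm
  rw [kornMaxwellData, kornMaxwellData, add_mul]
  refine (add_le_add hHolder hLp.le).trans ?_
  gcongr
  · exact le_self_add
  · exact le_add_self

end ChangeOfCoordinates

theorem korn_maxwell_morrey_general {X V W₁ W₂ : Type*} [NormedAddCommGroup X] [NormedSpace ℝ X]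
    [FiniteDimensional ℝ X] [MeasurableSpace X] [BorelSpace X] [NormedAddCommGroup V]
    [NormedSpace ℝ V] [FiniteDimensional ℝ V] [NormedAddCommGroup W₁] [NormedSpace ℝ W₁]
    [FiniteDimensional ℝ W₁] [NormedAddCommGroup W₂] [NormedSpace ℝ W₂] [FiniteDimensional ℝ W₂]
    (μ : Measure X) [μ.IsAddHaarMeasure] {p : ℝ≥0} (hp : finrank ℝ X < p)
    {A : V →L[ℝ] W₁} {B : (X →L[ℝ] V) →L[ℝ] W₂} (hAB : IsJointlyElliptic A B) :
    ∃ c : ℝ≥0, ∀ F : X → V, ContDiff ℝ 1 F → HasCompactSupport F →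
      eHolderNorm (1 - finrank ℝ X / p) F ≤
        c * (eHolderNorm (1 - finrank ℝ X / p) (fun x ↦ A (F x)) +
          eLpNorm (fun x ↦ B (fderiv ℝ F x)) p μ) := by
  obtain hX | hX := subsingleton_or_nontrivial X
  · exact ⟨0, fun F _ _ ↦ eHolderNorm_le_iff.2 fun x y ↦ by simp [Subsingleton.elim x y]⟩
  let e := (toEuclidean (E := X)).symm
  set n := finrank ℝ X
  have hn : 1 ≤ n := finrank_pos
  set α : ℝ≥0 := 1 - n / p
  have hp0 : 0 < p := bot_le.trans_lt hp
  have hnp : (n : ℝ≥0) / p < 1 := (div_lt_one hp0).2 hp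
  have hα1 : α < 1 := tsub_lt_self one_pos (div_pos (mod_cast hn) hp0)
  have hα : (α : ℝ) = 1 - finrank ℝ (EuclideanSpace ℝ (Fin n)) / p := by
    simp [α, NNReal.coe_sub hnp.le]
  obtain ⟨K, hK⟩ : ∃ K, LipschitzWith K e.symm := ⟨_, e.symm.lipschitz⟩
  obtain ⟨C, hC_top, hC⟩ := (hAB.comp_precomp e).exists_eHolderNorm_le (tsub_pos_of_lt hnp) hα1 hα
  obtain ⟨D, hD_top, hD⟩ := exists_kornMaxwellData_comp_le e volume μ A B α p
  lift C to ℝ≥0 using hC_top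
  lift D to ℝ≥0 using hD_top
  refine ⟨K ^ (α : ℝ) * (C * D), fun F hF hFc ↦ ?_⟩
  have hcoord : eHolderNorm α (F ∘ e) ≤ C * (D * kornMaxwellData μ A B α p F) :=
    (hC (F ∘ e) (by fun_prop) (hFc.comp_homeomorph e.toHomeomorph)).trans (by gcongr; exact hD F)
  calc
    eHolderNorm α F = eHolderNorm α (fun x ↦ (F ∘ e) (e.symm x)) := by simp
    _ ≤ K ^ (α : ℝ) * eHolderNorm α (F ∘ e) := eHolderNorm_comp_le α _ hK
    _ ≤ K ^ (α : ℝ) * (C * (D * kornMaxwellData μ A B α p F)) := by gcongr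
    _ = ↑(K ^ (α : ℝ) * (C * D)) * kornMaxwellData μ A B α p F := by
      rw [ENNReal.coe_mul, ENNReal.coe_rpow_of_nonneg _ α.coe_nonneg, ENNReal.coe_mul]
      ring

lemma holderSeminorm_eq_eHolderNorm {V : Type*} [NormedAddCommGroup V] (r : ℝ≥0)
    (u : (Fin 3 → ℝ) → V) : holderSeminorm r u = eHolderNorm r u := by
  refine eq_of_forall_ge_iff fun C ↦ ?_
  rw [holderSeminorm, eHolderNorm_le_iff]
  simp only [iSup_le_iff]
  refine forall₂_congr fun x y ↦ ?_
  obtain rfl | hxy := eq_or_ne x y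
  · simp
  have hdist : 0 < dist x y := dist_pos.2 hxy
  rw [forall_prop_of_true hxy, ENNReal.ofReal_div_of_pos (by positivity), ofReal_norm,
    ← edist_eq_enorm_sub, ← ENNReal.ofReal_rpow_of_pos hdist, ← edist_dist,
    ENNReal.div_le_iff (by simp [hxy]) (by finiteness)]

/-- The row-wise curl as a linear function of the derivative, so that `mcurl F x` is
`rowCurl (fderiv ℝ F x)`. -/
noncomputable def rowCurl :
    ((Fin 3 → ℝ) →L[ℝ] Fin 3 → Fin 3 → ℝ) →L[ℝ] Fin 3 → Fin 3 → ℝ :=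
  LinearMap.toContinuousLinearMap
    { toFun := fun T i ↦ ![T (Pi.single 1 1) i 2 - T (Pi.single 2 1) i 1,
        T (Pi.single 2 1) i 0 - T (Pi.single 0 1) i 2,
        T (Pi.single 0 1) i 1 - T (Pi.single 1 1) i 0]
      map_add' := fun S T ↦ by
        ext i j
        fin_cases j <;> simp <;> ring
      map_smul' := fun c T ↦ by
        ext i j
        fin_cases j <;> simp <;> ring }

lemma mcurl_eq_rowCurl_fderiv {F : (Fin 3 → ℝ) → Fin 3 → Fin 3 → ℝ} (hF : Differentiable ℝ F)
    (x : Fin 3 → ℝ) : mcurl F x = rowCurl (fderiv ℝ F x) := by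
  have hpd (j i k) : pd j (fun y ↦ F y i k) x = fderiv ℝ F x (Pi.single j 1) i k := by
    have h := hasFDerivAt_pi'.1 (hasFDerivAt_pi'.1 (hF x).hasFDerivAt i) k
    rw [pd, h.fderiv]
    rfl
  ext i j
  simp only [mcurl, hpd]
  rfl

lemma mul_comm_of_rowCurl_smulRight_eq_zero {ξ : (Fin 3 → ℝ) →L[ℝ] ℝ} {v : Fin 3 → Fin 3 → ℝ}
    (hv : rowCurl (ξ.smulRight v) = 0) (i j k : Fin 3) :
    ξ (Pi.single j 1) * v i k = ξ (Pi.single k 1) * v i j := by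
  have h₀ : ξ (Pi.single 1 1) * v i 2 = ξ (Pi.single 2 1) * v i 1 :=
    sub_eq_zero.1 (congr_fun₂ hv i 0)
  have h₁ : ξ (Pi.single 2 1) * v i 0 = ξ (Pi.single 0 1) * v i 2 :=
    sub_eq_zero.1 (congr_fun₂ hv i 1)
  have h₂ : ξ (Pi.single 0 1) * v i 1 = ξ (Pi.single 1 1) * v i 0 :=
    sub_eq_zero.1 (congr_fun₂ hv i 2)
  fin_cases j <;> fin_cases k <;> simp [h₀, h₁, h₂]

lemma IsElliptic.isJointlyElliptic_rowCurl {N : ℕ}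
    {A : (Fin 3 → Fin 3 → ℝ) →ₗ[ℝ] (Fin N → ℝ)} (hA : IsElliptic A) :
    IsJointlyElliptic A.toContinuousLinearMap rowCurl := by
  intro ξ hξ v hAv hv
  set η : Fin 3 → ℝ := fun j ↦ ξ (Pi.single j 1)
  obtain ⟨j₀, hj₀⟩ : ∃ j, η j ≠ 0 := by
    by_contra! hη
    exact hξ (ContinuousLinearMap.coe_injective (LinearMap.pi_ext' fun j ↦
      LinearMap.ext_ring (hη j)))
  set w : Fin 3 → ℝ := fun i ↦ v i j₀ / η j₀
  have hvw : v = fun i j ↦ w i * η j := by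
    ext i j
    rw [div_mul_eq_mul_div, eq_div_iff hj₀, mul_comm, mul_comm_of_rowCurl_smulRight_eq_zero hv,
      mul_comm]
  have hw : w = 0 := by
    refine hA η (Function.ne_iff.2 ⟨j₀, hj₀⟩) ?_
    simp only [← hvw, Pi.zero_apply, zero_mul]
    exact hAv.trans A.map_zero.symm
  rw [hvw, hw]
  ext i j
  simp

/-- Korn–Maxwell–Morrey inequality: for `3 < p < ∞`, `α = 1 − 3/p`, and `A` inducing an
elliptic operator, `[F]_{C^{0,α}} ≤ c([A[F]]_{C^{0,α}} + ‖curl F‖_{Lᵖ(ℝ³)})` for all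
`F ∈ C_c^∞(ℝ³; ℝ^{3×3})`. -/
theorem korn_maxwell_morrey (p : ℝ) (hp : 3 < p) (N : ℕ)
    (A : (Fin 3 → Fin 3 → ℝ) →ₗ[ℝ] (Fin N → ℝ)) (hA : IsElliptic A) :
    ∃ c : ℝ, 0 < c ∧
      ∀ F : (Fin 3 → ℝ) → Fin 3 → Fin 3 → ℝ,
        ContDiff ℝ (⊤ : ℕ∞) F → HasCompactSupport F →
          holderSeminorm (1 - 3 / p) F ≤
            ENNReal.ofReal c *
              (holderSeminorm (1 - 3 / p) (fun x => A (F x)) +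
                eLpNorm (fun x => mcurl F x) (ENNReal.ofReal p) volume) := by
  obtain ⟨p, rfl⟩ : ∃ q : ℝ≥0, p = q := ⟨⟨p, by linarith⟩, rfl⟩
  replace hp : 3 < p := mod_cast hp
  obtain ⟨c, hc⟩ := korn_maxwell_morrey_general volume (p := p) (by simpa)
    hA.isJointlyElliptic_rowCurl
  refine ⟨c + 1, by positivity, fun F hF hFc ↦ ?_⟩
  have hα : (1 - 3 / p : ℝ) = (1 - 3 / p : ℝ≥0) := by
    rw [NNReal.coe_sub (div_le_one_of_le₀ hp.le bot_le)]; simp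
  have hcurl : mcurl F = fun x ↦ rowCurl (fderiv ℝ F x) :=
    funext (mcurl_eq_rowCurl_fderiv (hF.differentiable (by simp)))
  have h := hc F (hF.of_le (by simp)) hFc
  simp only [finrank_fin_fun, Nat.cast_ofNat, LinearMap.coe_toContinuousLinearMap'] at h
  have hc1 : (c : ℝ≥0∞) ≤ ENNReal.ofReal (c + 1) := by
    rw [← ENNReal.ofReal_coe_nnreal]
    exact ENNReal.ofReal_le_ofReal (le_add_of_nonneg_right one_pos.le)
  rw [hα, holderSeminorm_eq_eHolderNorm, holderSeminorm_eq_eHolderNorm, hcurl,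
    ENNReal.ofReal_coe_nnreal]
  exact h.trans (by gcongr)
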